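/- Let k ≥ 2 be an integer such that the binomial coefficient C(2k+1, k) is even. Then the odd graph O_{k+1} = K(2k+1, k) is not a Cayley graph; that is, no subgroup of the automorphism group of O_{k+1} acts regularly (freely and transitively) on its vertex set. -/

import Mathlib

/-- The Kneser graph `K(n,k)`: vertices are the `k`-element subsets of `Fin n`,
with two vertices adjacent iff the corresponding subsets are disjoint. -/
def kneserGraph (n k : ℕ) : SimpleGraph {s : Finset (Fin n) // s.card = k} :=
  SimpleGraph.fromRel (fun v w => Disjoint v.val w.val)

/-- A graph is a Cayley graph iff some subgroup of its automorphism group acts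
regularly (freely and transitively) on the vertex set. -/
def IsCayleyGraph {V : Type*} (G : SimpleGraph V) : Prop :=
  ∃ H : Subgroup (G ≃g G), ∀ v w : V, ∃! g : H, (g : G ≃g G) v = w

/-!
A group acting regularly on an even number of vertices contains an involution, and that involution
moves every vertex. For `2 * k < n`, however, every automorphism of `K(n, k)` is induced by a
permutation `σ` of the points. If `σ` is an involution and `k` is even or `n` is odd, then some
union of 2-cycles and fixed points of `σ` has `k` elements, and it is a fixed vertex.

That automorphisms come from permutations of the points is shown by induction on `k`. When
`#(A ∪ B) + k ≤ n`, the relation `C ⊆ A ∪ B` between vertices says that every common neighbour of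
`A` and `B` is a neighbour of `C`, so automorphisms preserve it, and counting such `C` shows that
they preserve `#(A ∪ B)`. Consequently, the images of the `k`-sets containing a given `(k - 1)`-set
again share a `(k - 1)`-set, which yields an automorphism of `K(n, k - 1)`.
-/

open Finset hiding powersetCard
open Set (powersetCard)
open scoped Pointwise

theorem choose_left_injOn {k : ℕ} (hk : 0 < k) :
    Set.InjOn (fun m ↦ m.choose k) (Set.Ici k) := by
  refine (strictMonoOn_of_lt_add_one Set.ordConnected_Ici fun m _ hm _ ↦ ?_).injOn
  rw [Nat.choose_succ_left m k hk]
  exact Nat.lt_add_of_pos_left (Nat.choose_pos ((Nat.sub_le k 1).trans hm))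

section Finset

variable {α : Type*} {k : ℕ}

theorem card_powersetCard_subset (U : Finset α) (k : ℕ) :
    Nat.card {C : powersetCard α k // (C : Finset α) ⊆ U} = (#U).choose k := by
  rw [← card_powersetCard, ← Nat.card_eq_finsetCard]
  refine Nat.card_congr ((Equiv.subtypeSubtypeEquivSubtypeInter _ (· ⊆ U)).trans
    (Equiv.subtypeEquivRight fun C ↦ ?_))
  rw [mem_powersetCard, and_comm]
  rfl

theorem exists_disjoint_powersetCard_iff [Fintype α] {U : Finset α} :
    (∃ D : powersetCard α k, Disjoint U D) ↔ #U + k ≤ Fintype.card α := by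
  classical
  constructor
  · rintro ⟨D, hD⟩
    rw [← powersetCard.card_eq D, ← card_union_of_disjoint hD]
    exact card_le_univ _
  · intro h
    obtain ⟨D, hDU, hD⟩ := exists_subset_card_eq (s := Uᶜ) (n := k) (by grind [card_compl])
    exact ⟨⟨D, hD⟩, subset_compl_iff_disjoint_left.1 hDU⟩

theorem subset_iff_forall_disjoint_powersetCard [Fintype α] {C U : Finset α} (hk : 0 < k)
    (hU : #U + k ≤ Fintype.card α) :
    C ⊆ U ↔ ∀ D : powersetCard α k, Disjoint U D → Disjoint C D := by
  classical
  refine ⟨fun h D ↦ Disjoint.mono_left h, fun h c hcC ↦ ?_⟩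
  by_contra hcU
  obtain ⟨D, hcD, hDU, hD⟩ := exists_subsuperset_card_eq (s := {c}) (t := Uᶜ) (n := k)
    (by simpa using hcU) (by simpa using Nat.succ_le_of_lt hk) (by grind [card_compl])
  exact disjoint_left.1 (h ⟨D, hD⟩ (subset_compl_iff_disjoint_left.1 hDU)) hcC
    (singleton_subset_iff.1 hcD)

theorem exists_disjoint_superset_powersetCard [Fintype α] {S T : powersetCard α k}
    (hST : Disjoint (S : Finset α) T) (hcard : 2 * (k + 1) ≤ Fintype.card α) :
    ∃ A B : powersetCard α (k + 1), (S : Finset α) ⊆ A ∧ (T : Finset α) ⊆ B ∧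
      Disjoint (A : Finset α) B := by
  classical
  have hS := powersetCard.card_eq S
  have hT := powersetCard.card_eq T
  obtain ⟨A, hSA, hAT, hA⟩ := exists_subsuperset_card_eq (s := (S : Finset α))
    (t := (T : Finset α)ᶜ) (n := k + 1) (subset_compl_iff_disjoint_right.2 hST) (by omega)
    (by rw [card_compl]; omega)
  obtain ⟨B, hTB, hBA, hB⟩ := exists_subsuperset_card_eq (s := (T : Finset α)) (t := Aᶜ)
    (n := k + 1) (subset_compl_comm.1 hAT) (by omega) (by rw [card_compl]; omega)
  exact ⟨⟨A, hA⟩, ⟨B, hB⟩, hSA, hTB, subset_compl_iff_disjoint_left.1 hBA⟩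

variable [DecidableEq α]

theorem exists_inter_eq_powersetCard [Fintype α] (S : powersetCard α k)
    (hk : k + 2 ≤ Fintype.card α) :
    ∃ A B : powersetCard α (k + 1), A ≠ B ∧ (A ∩ B : Finset α) = S := by
  have hS := powersetCard.card_eq S
  obtain ⟨D, hD⟩ := exists_disjoint_powersetCard_iff (k := 2) (U := (S : Finset α)).2 (by omega)
  obtain ⟨a, b, hab, hDab⟩ := card_eq_two.1 (powersetCard.card_eq D)
  rw [hDab, disjoint_insert_right, disjoint_singleton_right] at hD
  have ha : a ∉ insert b (S : Finset α) := by simp [hab, hD.1]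
  refine ⟨⟨insert a S, by grind [powersetCard.mem_iff]⟩,
    ⟨insert b S, by grind [powersetCard.mem_iff]⟩, fun h ↦ ha ?_, by grind⟩
  exact (congrArg Subtype.val h).subset (mem_insert_self a _)

theorem exists_insert_eq_of_subset {S : powersetCard α k} {A : powersetCard α (k + 1)}
    (hSA : (S : Finset α) ⊆ A) : ∃ a ∉ (S : Finset α), insert a (S : Finset α) = A :=
  exists_eq_insert_iff.2 ⟨hSA, by simp only [powersetCard.card_eq]⟩

theorem card_union_of_common_subset {S : powersetCard α k} {A B : powersetCard α (k + 1)}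
    (hSA : (S : Finset α) ⊆ A) (hSB : (S : Finset α) ⊆ B) (hAB : A ≠ B) :
    #(A ∪ B : Finset α) = k + 2 := by
  have hS := powersetCard.card_eq S
  have hAB := Subtype.coe_injective.ne hAB
  obtain ⟨a, ha, hA⟩ := exists_insert_eq_of_subset hSA
  obtain ⟨b, hb, hB⟩ := exists_insert_eq_of_subset hSB
  grind

theorem not_subset_union_of_common_subset {S : powersetCard α k}
    {A B C : powersetCard α (k + 1)} (hSA : (S : Finset α) ⊆ A) (hSB : (S : Finset α) ⊆ B)
    (hSC : (S : Finset α) ⊆ C) (hCA : C ≠ A) (hCB : C ≠ B) : ¬ (C : Finset α) ⊆ A ∪ B := by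
  have hCA := Subtype.coe_injective.ne hCA
  have hCB := Subtype.coe_injective.ne hCB
  obtain ⟨a, ha, hA⟩ := exists_insert_eq_of_subset hSA
  obtain ⟨b, -, hB⟩ := exists_insert_eq_of_subset hSB
  obtain ⟨c, hc, hC⟩ := exists_insert_eq_of_subset hSC
  grind

theorem inter_subset_of_not_subset_union {A B C : Finset α} (hA : #A = k + 1) (hB : #B = k + 1)
    (hC : #C = k + 1) (hAB : #(A ∪ B) = k + 2) (hAC : #(A ∪ C) = k + 2) (hBC : #(B ∪ C) = k + 2)
    (h : ¬ C ⊆ A ∪ B) : A ∩ B ⊆ C := by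
  obtain ⟨c, hcC, hc⟩ := not_subset.1 h
  have hAC' : A ∩ C = C.erase c := eq_of_subset_of_card_le (by grind) (by grind)
  have hBC' : B ∩ C = C.erase c := eq_of_subset_of_card_le (by grind) (by grind)
  have hAB' : C.erase c = A ∩ B := eq_of_subset_of_card_le (by grind) (by grind)
  exact hAB' ▸ erase_subset c C

end Finset

section PreservesDisjoint

variable {α : Type*} {k : ℕ}

/-- A permutation of the `k`-subsets of `α` preserving and reflecting disjointness. For `0 < k`
these are the automorphisms of the Kneser graph on the ground set `α`; they are phrased through sets
rather than graphs so that `α` can be any finite type. -/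
def PreservesDisjoint (e : Equiv.Perm (powersetCard α k)) : Prop :=
  ∀ A B, Disjoint (e A : Finset α) (e B) ↔ Disjoint (A : Finset α) B

namespace PreservesDisjoint

variable {e : Equiv.Perm (powersetCard α k)} {A B C : powersetCard α k}

theorem symm (he : PreservesDisjoint e) : PreservesDisjoint e.symm := fun A B ↦ by
  rw [← he, e.apply_symm_apply, e.apply_symm_apply]

variable [Fintype α] [DecidableEq α]

theorem card_map_union_add_le (he : PreservesDisjoint e)
    (hAB : #(A ∪ B : Finset α) + k ≤ Fintype.card α) :
    #(e A ∪ e B : Finset α) + k ≤ Fintype.card α := by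
  obtain ⟨D, hD⟩ := exists_disjoint_powersetCard_iff.2 hAB
  refine exists_disjoint_powersetCard_iff.1 ⟨e D, ?_⟩
  rw [disjoint_union_left] at hD ⊢
  exact ⟨(he A D).2 hD.1, (he B D).2 hD.2⟩

theorem map_subset_union_iff (he : PreservesDisjoint e) (hk : 0 < k)
    (hAB : #(A ∪ B : Finset α) + k ≤ Fintype.card α) :
    (e C : Finset α) ⊆ e A ∪ e B ↔ (C : Finset α) ⊆ A ∪ B := by
  rw [subset_iff_forall_disjoint_powersetCard hk hAB,
    subset_iff_forall_disjoint_powersetCard hk (he.card_map_union_add_le hAB), e.surjective.forall]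
  simp only [disjoint_union_left, he _ _]

theorem card_map_union (he : PreservesDisjoint e) (hk : 0 < k)
    (hAB : #(A ∪ B : Finset α) + k ≤ Fintype.card α) :
    #(e A ∪ e B : Finset α) = #(A ∪ B : Finset α) := by
  have le_card_union (A B : powersetCard α k) : k ≤ #(A ∪ B : Finset α) :=
    (powersetCard.card_eq A).symm.trans_le (card_le_card subset_union_left)
  refine choose_left_injOn hk (le_card_union _ _) (le_card_union _ _) ?_
  simp only [← card_powersetCard_subset]
  exact (Nat.card_congr (e.subtypeEquiv fun C ↦ (he.map_subset_union_iff hk hAB).symm)).symm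

end PreservesDisjoint

end PreservesDisjoint

section Shadow

variable {α : Type*} {k : ℕ} {e : Equiv.Perm (powersetCard α (k + 1))}

/-- The map `f` on `k`-subsets is a shadow of the permutation `e` of the `(k + 1)`-subsets if it is
compatible with inclusion: `S ⊆ A` implies `f S ⊆ e A`. Shadows carry the proof that `e` comes from
a permutation of points down from `k + 1` to `k`. -/
def IsShadowMap (f : powersetCard α k → powersetCard α k)
    (e : Equiv.Perm (powersetCard α (k + 1))) : Prop :=
  ∀ (S : powersetCard α k) (A : powersetCard α (k + 1)),
    (S : Finset α) ⊆ A → (f S : Finset α) ⊆ e A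

theorem PreservesDisjoint.card_map_union_of_common_subset [Fintype α] [DecidableEq α]
    (he : PreservesDisjoint e) (hcard : 2 * (k + 1) < Fintype.card α) {S : powersetCard α k}
    {A B : powersetCard α (k + 1)} (hSA : (S : Finset α) ⊆ A) (hSB : (S : Finset α) ⊆ B)
    (hAB : A ≠ B) : #(e A ∪ e B : Finset α) = k + 2 := by
  have h := card_union_of_common_subset hSA hSB hAB
  rw [he.card_map_union k.succ_pos (by omega), h]

theorem PreservesDisjoint.map_inter_subset_of_common_subset [Fintype α] [DecidableEq α]
    (he : PreservesDisjoint e) (hcard : 2 * (k + 1) < Fintype.card α) {S : powersetCard α k}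
    {A B C : powersetCard α (k + 1)} (hSA : (S : Finset α) ⊆ A) (hSB : (S : Finset α) ⊆ B)
    (hSC : (S : Finset α) ⊆ C) (hAB : A ≠ B) : (e A ∩ e B : Finset α) ⊆ e C := by
  obtain rfl | hCA := eq_or_ne C A
  · exact inter_subset_left
  obtain rfl | hCB := eq_or_ne C B
  · exact inter_subset_right
  have hunion := card_union_of_common_subset hSA hSB hAB
  have hnot : ¬ (e C : Finset α) ⊆ e A ∪ e B := by
    rw [he.map_subset_union_iff k.succ_pos (by omega)]
    exact not_subset_union_of_common_subset hSA hSB hSC hCA hCB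
  exact inter_subset_of_not_subset_union (powersetCard.card_eq _) (powersetCard.card_eq _)
    (powersetCard.card_eq _) (he.card_map_union_of_common_subset hcard hSA hSB hAB)
    (he.card_map_union_of_common_subset hcard hSA hSC hCA.symm)
    (he.card_map_union_of_common_subset hcard hSB hSC hCB.symm) hnot

theorem PreservesDisjoint.exists_isShadowMap [Fintype α] (he : PreservesDisjoint e)
    (hcard : 2 * (k + 1) < Fintype.card α) :
    ∃ f : powersetCard α k → powersetCard α k, IsShadowMap f e := by
  classical
  suffices h : ∀ S : powersetCard α k, ∃ S' : powersetCard α k, ∀ A : powersetCard α (k + 1),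
      (S : Finset α) ⊆ A → (S' : Finset α) ⊆ e A from Classical.skolem.1 h
  intro S
  obtain ⟨A, B, hAB, hS⟩ := exists_inter_eq_powersetCard S (by omega)
  have hSA : (S : Finset α) ⊆ A := hS ▸ inter_subset_left
  have hSB : (S : Finset α) ⊆ B := hS ▸ inter_subset_right
  have hcard_inter : #(e A ∩ e B : Finset α) = k := by
    have := he.card_map_union_of_common_subset hcard hSA hSB hAB
    rw [card_inter, this, powersetCard.card_eq, powersetCard.card_eq]
    omega
  exact ⟨⟨_, hcard_inter⟩, fun C hSC ↦ he.map_inter_subset_of_common_subset hcard hSA hSB hSC hAB⟩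

namespace IsShadowMap

theorem leftInverse [Fintype α] {f f' : powersetCard α k → powersetCard α k}
    (hf : IsShadowMap f e) (hf' : IsShadowMap f' e.symm) (hk : k + 2 ≤ Fintype.card α) :
    Function.LeftInverse f' f := by
  classical
  intro S
  have apply_apply_subset (C : powersetCard α (k + 1)) (hSC : (S : Finset α) ⊆ C) :
      (f' (f S) : Finset α) ⊆ C := by
    simpa only [e.symm_apply_apply] using hf' _ _ (hf S C hSC)
  obtain ⟨A, B, -, hS⟩ := exists_inter_eq_powersetCard S hk
  rw [powersetCard.eq_iff_subset, ← hS]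
  exact subset_inter (apply_apply_subset A (hS ▸ inter_subset_left))
    (apply_apply_subset B (hS ▸ inter_subset_right))

theorem disjoint [Fintype α] {f : powersetCard α k → powersetCard α k} (hf : IsShadowMap f e)
    (he : PreservesDisjoint e) (hcard : 2 * (k + 1) ≤ Fintype.card α) {S T : powersetCard α k}
    (hST : Disjoint (S : Finset α) T) : Disjoint (f S : Finset α) (f T) := by
  obtain ⟨A, B, hSA, hTB, hAB⟩ := exists_disjoint_superset_powersetCard hST hcard
  exact ((he A B).2 hAB).mono (hf S A hSA) (hf T B hTB)

theorem toPerm_eq [DecidableEq α] {σ : Equiv.Perm α} (hk : 0 < k)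
    (hσ : IsShadowMap (MulAction.toPerm σ : Equiv.Perm (powersetCard α k)) e) :
    MulAction.toPerm σ = e := by
  ext1 A
  rw [powersetCard.eq_iff_subset]
  intro b hb
  obtain ⟨a, ha, rfl⟩ := mem_smul_finset.1 hb
  obtain ⟨S, haS, hSA, hS⟩ := exists_subsuperset_card_eq (singleton_subset_iff.2 ha) (n := k)
    (by simpa using Nat.succ_le_of_lt hk) (by simp)
  exact hσ ⟨S, hS⟩ A hSA (smul_mem_smul_finset (singleton_subset_iff.1 haS))

end IsShadowMap

theorem PreservesDisjoint.exists_perm_isShadowMap [Fintype α] (he : PreservesDisjoint e)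
    (hcard : 2 * (k + 1) < Fintype.card α) :
    ∃ d : Equiv.Perm (powersetCard α k), PreservesDisjoint d ∧ IsShadowMap d e := by
  obtain ⟨f, hf⟩ := he.exists_isShadowMap hcard
  obtain ⟨f', hf'⟩ := he.symm.exists_isShadowMap hcard
  have hf'f : Function.LeftInverse f' f := hf.leftInverse hf' (by omega)
  have hff' : Function.LeftInverse f f' := hf'.leftInverse hf (by omega)
  refine ⟨⟨f, f', hf'f, hff'⟩, fun S T ↦ ⟨fun h ↦ ?_, hf.disjoint he hcard.le⟩, hf⟩
  simpa only [Equiv.coe_fn_mk, hf'f _] using hf'.disjoint he.symm hcard.le h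

theorem exists_toPerm_eq_of_powersetCard_one [DecidableEq α]
    (e : Equiv.Perm (powersetCard α 1)) : ∃ σ : Equiv.Perm α, MulAction.toPerm σ = e := by
  refine ⟨powersetCard.ofSingleton.permCongr.symm e, Equiv.ext fun A ↦ ?_⟩
  obtain ⟨a, rfl⟩ := powersetCard.ofSingleton.surjective A
  refine Eq.trans (Subtype.ext ?_) (powersetCard.ofSingleton.apply_symm_apply _)
  exact smul_finset_singleton a

theorem PreservesDisjoint.exists_toPerm_eq [Fintype α] [DecidableEq α]
    {e : Equiv.Perm (powersetCard α k)} (he : PreservesDisjoint e)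
    (hcard : 2 * k < Fintype.card α) : ∃ σ : Equiv.Perm α, MulAction.toPerm σ = e := by
  induction k with
  | zero =>
    refine ⟨1, Equiv.ext fun A ↦ Subtype.ext ?_⟩
    rw [card_eq_zero.1 (powersetCard.card_eq (e A)), card_eq_zero.1 (powersetCard.card_eq _)]
  | succ k ih =>
    obtain rfl | hk := k.eq_zero_or_pos
    · exact exists_toPerm_eq_of_powersetCard_one e
    · obtain ⟨d, hd, hde⟩ := he.exists_perm_isShadowMap hcard
      obtain ⟨σ, rfl⟩ := ih hd (by omega)
      exact ⟨σ, hde.toPerm_eq hk⟩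

end Shadow

section Involution

variable {α : Type*} [Fintype α] [DecidableEq α] {σ : Equiv.Perm α}

theorem exists_subset_support_smul_eq (hσ : σ ^ 2 = 1) {i : ℕ} (hi : 2 * i ≤ #σ.support) :
    ∃ T ⊆ σ.support, #T = 2 * i ∧ σ • T = T := by
  induction i with
  | zero => exact ⟨∅, empty_subset _, rfl, smul_finset_empty σ⟩
  | succ i ih =>
    obtain ⟨T, hT, hTcard, hσT⟩ := ih (by omega)
    obtain ⟨a, ha, haT⟩ := exists_mem_notMem_of_card_lt_card (s := T) (t := σ.support) (by omega)
    have hσσa : σ (σ a) = a := by simpa [pow_two] using DFunLike.congr_fun hσ a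
    have hσaT : σ a ∉ T := fun h ↦ haT (smul_mem_smul_finset_iff σ |>.1 (hσT.symm ▸ h))
    have hσa : σ a ≠ a := Equiv.Perm.mem_support.1 ha
    refine ⟨insert a (insert (σ a) T), ?_, ?_, ?_⟩
    · grind [Equiv.Perm.apply_mem_support]
    · grind
    · rw [smul_finset_insert, smul_finset_insert, hσT, Equiv.Perm.smul_def, Equiv.Perm.smul_def,
        hσσa, insert_comm]

theorem smul_eq_of_disjoint_support {T : Finset α} (hT : Disjoint σ.support T) : σ • T = T := by
  have hfix : Set.EqOn σ id T := fun x hx ↦ Equiv.Perm.notMem_support.1 (disjoint_right.1 hT hx)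
  exact (image_congr hfix).trans image_id

theorem exists_powersetCard_smul_eq (hσ : σ ^ 2 = 1) {k : ℕ} (hk : k ≤ Fintype.card α)
    (hpar : Even k ∨ Odd (Fintype.card α)) : ∃ T : powersetCard α k, σ • T = T := by
  -- Take as many 2-cycles as fit into `k` points and fill up with fixed points. If a single point
  -- is missing although 2-cycles remain, then `k` is odd; so is `card α`, and `σ` fixes a point.
  obtain ⟨m, hm⟩ := Equiv.Perm.two_dvd_card_support hσ
  obtain ⟨T, hT, hTcard, hσT⟩ := exists_subset_support_smul_eq hσ (i := min (k / 2) m) (by omega)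
  obtain ⟨F, hF, hFcard⟩ := exists_subset_card_eq (s := σ.supportᶜ) (n := k - 2 * min (k / 2) m)
    (by grind [card_compl, card_le_univ σ.support])
  have hF : Disjoint σ.support F := subset_compl_iff_disjoint_left.1 hF
  refine ⟨⟨T ∪ F, ?_⟩, Subtype.ext ?_⟩
  · rw [powersetCard.mem_iff, card_union_of_disjoint (hF.mono_left hT)]
    omega
  · rw [powersetCard.coe_smul, smul_finset_union, hσT, smul_eq_of_disjoint_support hF]

end Involution

section Kneser

variable {n k : ℕ}

theorem kneserGraph_adj (hk : 0 < k) {A B : {s : Finset (Fin n) // #s = k}} :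
    (kneserGraph n k).Adj A B ↔ Disjoint A.1 B.1 := by
  rw [kneserGraph, SimpleGraph.fromRel_adj, disjoint_comm (a := B.1), or_self,
    and_iff_right_iff_imp]
  rintro h rfl
  grind [disjoint_self_iff_empty]

theorem exists_toPerm_eq_of_kneserGraph_iso (hk : 0 < k) (hkn : 2 * k < n)
    (g : kneserGraph n k ≃g kneserGraph n k) :
    ∃ σ : Equiv.Perm (Fin n), ∀ A : powersetCard (Fin n) k, σ • A = g A := by
  have he : PreservesDisjoint (g.toEquiv : Equiv.Perm (powersetCard (Fin n) k)) := fun A B ↦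
    (kneserGraph_adj hk).symm.trans (g.map_adj_iff.trans (kneserGraph_adj hk))
  obtain ⟨σ, hσ⟩ := he.exists_toPerm_eq (by simpa using hkn)
  exact ⟨σ, DFunLike.congr_fun hσ⟩

theorem exists_kneserGraph_iso_apply_eq (hk : 0 < k) (hkn : 2 * k < n) (hpar : Even k ∨ Odd n)
    {g : kneserGraph n k ≃g kneserGraph n k} (hg : Function.Involutive g) : ∃ A, g A = A := by
  obtain ⟨σ, hσ⟩ := exists_toPerm_eq_of_kneserGraph_iso hk hkn g
  have hσ_sq : σ ^ 2 = 1 := by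
    have : FaithfulSMul (Equiv.Perm (Fin n)) (powersetCard (Fin n) k) :=
      powersetCard.faithfulSMul hk (by simp; omega)
    refine eq_of_smul_eq_smul fun A : powersetCard (Fin n) k ↦ ?_
    rw [pow_two, mul_smul, hσ, hσ, one_smul]
    exact hg A
  obtain ⟨T, hT⟩ := exists_powersetCard_smul_eq hσ_sq (k := k) (by simp; omega)
    (by simpa using hpar)
  exact ⟨T, (hσ T).symm.trans hT⟩

end Kneser

theorem IsCayleyGraph.exists_involutive_forall_apply_ne {V : Type*} [Finite V]
    {G : SimpleGraph V} (hG : IsCayleyGraph G) (hV : Even (Nat.card V)) :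
    ∃ g : G ≃g G, Function.Involutive g ∧ ∀ v, g v ≠ v := by
  obtain ⟨H, hH⟩ := hG
  obtain _ | ⟨⟨v₀⟩⟩ := isEmpty_or_nonempty V
  · exact ⟨.refl, isEmptyElim, isEmptyElim⟩
  have hbij : Function.Bijective fun g : H ↦ (g : G ≃g G) v₀ :=
    Function.bijective_iff_existsUnique _ |>.2 (hH v₀)
  have : Finite H := .of_injective _ hbij.injective
  obtain ⟨g, hg⟩ := exists_prime_orderOf_dvd_card' (G := H) 2
    (Nat.card_eq_of_bijective _ hbij ▸ hV.two_dvd)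
  have hg_sq : (g * g : G ≃g G) = 1 := by
    have := orderOf_dvd_iff_pow_eq_one.1 hg.dvd
    rw [pow_two] at this
    exact congrArg Subtype.val this
  refine ⟨g, DFunLike.congr_fun hg_sq, fun v hv ↦ ?_⟩
  have : g = 1 := (hH v v).unique hv rfl
  simp [this] at hg

theorem odd_graph_not_cayley_of_even_order_general {n k : ℕ} (hkn : 2 * k < n)
    (hpar : Even k ∨ Odd n) (heven : Even (n.choose k)) :
    ¬ IsCayleyGraph (kneserGraph n k) := by
  intro hG
  have hk : 0 < k := Nat.pos_of_ne_zero fun h ↦ by simp [h] at heven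
  obtain ⟨g, hg, hg_ne⟩ := hG.exists_involutive_forall_apply_ne (by simpa using heven)
  obtain ⟨A, hA⟩ := exists_kneserGraph_iso_apply_eq hk hkn hpar hg
  exact hg_ne A hA

theorem odd_graph_not_cayley_of_even_order (k : ℕ) (hk : 2 ≤ k)
    (heven : Even ((2 * k + 1).choose k)) :
    ¬ IsCayleyGraph (kneserGraph (2 * k + 1) k) :=
  odd_graph_not_cayley_of_even_order_general (by omega) (.inr (odd_two_mul_add_one k)) heven
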